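/- arXiv:1606.03730 — 2 statements merged into one kernel-verified Lean document; each statement's English description precedes it below -/
import Mathlib

section
/- If two nonnegative random variables X and Y have Mellin transforms that are finite and equal on some nonempty open interval (α, β) ⊂ ℝ, then X and Y have the same distribution. -/
open MeasureTheory Set Filter

/-! The integral of `X ^ s` over `{X ≠ 0}` is the moment generating function of `log X` for the
measure `P` restricted to `{X ≠ 0}`. For `s ≠ 0` it is also the integral over the whole space; for
`s < 0` this rests on the convention `0 ^ s = 0`. A moment generating function finite near `t`
extends holomorphically to a vertical strip, where the identity theorem applies; on the line
`t + iℝ` its values are the characteristic function of the law weighted by `exp (t x)`, a finite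
measure, which they therefore determine. This gives the law of `X` off `0`, and the atom at `0` is
the missing mass. -/

open ProbabilityTheory Topology

section MeasureExt

variable {α : Type*} [MeasurableSpace α] {μ ν : Measure α}

theorem eq_of_withDensity_eq {f : α → ENNReal} (hf : Measurable f) (hf0 : ∀ x, f x ≠ 0)
    (hftop : ∀ x, f x ≠ ⊤) (h : μ.withDensity f = ν.withDensity f) : μ = ν := by
  rw [← withDensity_inv_same (μ := μ) hf (ae_of_all _ hf0) (ae_of_all _ hftop), h,
    withDensity_inv_same hf (ae_of_all _ hf0) (ae_of_all _ hftop)]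

theorem eq_of_restrict_compl_singleton_eq [MeasurableSingletonClass α] [IsFiniteMeasure μ] {a : α}
    (huniv : μ univ = ν univ) (h : μ.restrict {a}ᶜ = ν.restrict {a}ᶜ) : μ = ν := by
  have hcompl : μ {a}ᶜ = ν {a}ᶜ := by
    simpa only [Measure.restrict_apply_univ] using congrArg (· univ) h
  have hatom : μ {a} = ν {a} := by
    have hμfin : μ {a}ᶜ ≠ ⊤ := measure_ne_top μ _
    rw [← compl_compl ({a} : Set α), measure_compl (measurableSet_singleton a).compl hμfin,
      measure_compl (measurableSet_singleton a).compl (hcompl ▸ hμfin), huniv, hcompl]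
  rw [← Measure.restrict_add_restrict_compl (μ := μ) (measurableSet_singleton a),
    ← Measure.restrict_add_restrict_compl (μ := ν) (measurableSet_singleton a), h,
    Measure.restrict_singleton, Measure.restrict_singleton, hatom]

end MeasureExt

section MomentGeneratingFunction

theorem frequently_nhdsNE_ofReal {p : ℂ → Prop} {t : ℝ} (h : ∃ᶠ s : ℝ in 𝓝[≠] t, p s) :
    ∃ᶠ z in 𝓝[≠] (t : ℂ), p z :=
  (Complex.continuous_ofReal.continuousAt.continuousWithinAt.tendsto_nhdsWithin
    fun _ hs ↦ Complex.ofReal_injective.ne hs).frequently h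

variable {Ω₁ Ω₂ : Type*} [MeasurableSpace Ω₁] [MeasurableSpace Ω₂] {P : Measure Ω₁} {Q : Measure Ω₂}
  {X : Ω₁ → ℝ} {Y : Ω₂ → ℝ} {t : ℝ}

theorem eqOn_complexMGF_of_frequently_mgf_eq (hX : t ∈ interior (integrableExpSet X P))
    (hY : t ∈ interior (integrableExpSet Y Q)) (h : ∃ᶠ s in 𝓝[≠] t, mgf X P s = mgf Y Q s) :
    EqOn (complexMGF X P) (complexMGF Y Q)
      {z | z.re ∈ interior (integrableExpSet X P) ∩ interior (integrableExpSet Y Q)} := by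
  have hconv : Convex ℝ (interior (integrableExpSet X P) ∩ interior (integrableExpSet Y Q)) :=
    convex_integrableExpSet.interior.inter convex_integrableExpSet.interior
  refine AnalyticOnNhd.eqOn_of_preconnected_of_frequently_eq
    (analyticOnNhd_complexMGF.mono fun z hz ↦ hz.1) (analyticOnNhd_complexMGF.mono fun z hz ↦ hz.2)
    (hconv.linear_preimage Complex.reLm).isPreconnected (z₀ := (t : ℂ)) ⟨hX, hY⟩ ?_
  refine frequently_nhdsNE_ofReal (h.mono fun s hs ↦ ?_)
  rw [complexMGF_ofReal, complexMGF_ofReal, hs]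

theorem integrableExpSet_id_map (hX : AEMeasurable X P) :
    integrableExpSet id (P.map X) = integrableExpSet X P := by
  ext s
  exact integrable_map_measure (by fun_prop) hX

theorem charFun_withDensity_exp_mul (μ : Measure ℝ) (t u : ℝ) :
    charFun (μ.withDensity fun x ↦ ENNReal.ofReal (Real.exp (t * x))) u =
      complexMGF id μ (t + u * Complex.I) := by
  rw [charFun_apply_real, integral_withDensity_eq_integral_toReal_smul (by fun_prop) (by simp),
    complexMGF]
  refine integral_congr_ae (ae_of_all _ fun x ↦ ?_)
  dsimp only [id_eq]
  rw [ENNReal.toReal_ofReal (Real.exp_pos _).le, Complex.real_smul, Complex.ofReal_exp,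
    ← Complex.exp_add]
  push_cast
  ring_nf

theorem eq_of_frequently_mgf_id_eq {μ ν : Measure ℝ} (hμ : t ∈ interior (integrableExpSet id μ))
    (hν : t ∈ interior (integrableExpSet id ν))
    (h : ∃ᶠ s in 𝓝[≠] t, mgf id μ s = mgf id ν s) : μ = ν := by
  have : IsFiniteMeasure (μ.withDensity fun x ↦ ENNReal.ofReal (Real.exp (t * x))) :=
    isFiniteMeasure_withDensity_ofReal (interior_subset hμ).2
  have : IsFiniteMeasure (ν.withDensity fun x ↦ ENNReal.ofReal (Real.exp (t * x))) :=
    isFiniteMeasure_withDensity_ofReal (interior_subset hν).2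
  refine eq_of_withDensity_eq (f := fun x ↦ ENNReal.ofReal (Real.exp (t * x))) (by fun_prop)
    (fun x ↦ by simp [Real.exp_pos]) (fun x ↦ ENNReal.ofReal_ne_top)
    (Measure.ext_of_charFun (funext fun u ↦ ?_))
  rw [charFun_withDensity_exp_mul, charFun_withDensity_exp_mul]
  exact eqOn_complexMGF_of_frequently_mgf_eq hμ hν h (by simpa using ⟨hμ, hν⟩)

theorem map_eq_map_of_frequently_mgf_eq (hX : t ∈ interior (integrableExpSet X P))
    (hY : t ∈ interior (integrableExpSet Y Q)) (h : ∃ᶠ s in 𝓝[≠] t, mgf X P s = mgf Y Q s) :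
    P.map X = Q.map Y := by
  have hXm : AEMeasurable X P := aemeasurable_of_mem_interior_integrableExpSet hX
  have hYm : AEMeasurable Y Q := aemeasurable_of_mem_interior_integrableExpSet hY
  rw [← integrableExpSet_id_map hXm] at hX
  rw [← integrableExpSet_id_map hYm] at hY
  rw [← mgf_id_map hXm, ← mgf_id_map hYm] at h
  exact eq_of_frequently_mgf_id_eq hX hY h

end MomentGeneratingFunction

section Log

variable {Ω : Type*} [MeasurableSpace Ω] {P : Measure Ω} {X : Ω → ℝ}

theorem exp_mul_log_ae_eq_rpow (hX : ∀ᵐ ω ∂P, 0 < X ω) (s : ℝ) :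
    (fun ω ↦ Real.exp (s * Real.log (X ω))) =ᵐ[P] fun ω ↦ X ω ^ s := by
  filter_upwards [hX] with ω hω
  rw [Real.rpow_def_of_pos hω, mul_comm]

theorem mgf_log_eq_integral_rpow (hX : ∀ᵐ ω ∂P, 0 < X ω) (s : ℝ) :
    mgf (fun ω ↦ Real.log (X ω)) P s = ∫ ω, X ω ^ s ∂P :=
  integral_congr_ae (exp_mul_log_ae_eq_rpow hX s)

theorem mem_interior_integrableExpSet_log (hX : ∀ᵐ ω ∂P, 0 < X ω) {l : ℝ}
    (hint : ∀ᶠ s in 𝓝 l, Integrable (fun ω ↦ X ω ^ s) P) :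
    l ∈ interior (integrableExpSet (fun ω ↦ Real.log (X ω)) P) :=
  mem_interior_iff_mem_nhds.mpr <|
    hint.mono fun s hs ↦ hs.congr (exp_mul_log_ae_eq_rpow hX s).symm

theorem map_exp_map_log (hX : ∀ᵐ ω ∂P, 0 < X ω) (hlog : AEMeasurable (fun ω ↦ Real.log (X ω)) P) :
    (P.map fun ω ↦ Real.log (X ω)).map Real.exp = P.map X := by
  rw [AEMeasurable.map_map_of_aemeasurable Real.measurable_exp.aemeasurable hlog]
  exact Measure.map_congr (hX.mono fun ω hω ↦ Real.exp_log hω)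

end Log

section Mellin

variable {Ω₁ Ω₂ : Type*} [MeasurableSpace Ω₁] [MeasurableSpace Ω₂] {P : Measure Ω₁} {Q : Measure Ω₂}
  {X : Ω₁ → ℝ} {Y : Ω₂ → ℝ} {l : ℝ}

theorem map_eq_map_of_frequently_integral_rpow_eq_of_pos
    (hX : ∀ᵐ ω ∂P, 0 < X ω) (hY : ∀ᵐ ω ∂Q, 0 < Y ω)
    (hintX : ∀ᶠ s in 𝓝 l, Integrable (fun ω ↦ X ω ^ s) P)
    (hintY : ∀ᶠ s in 𝓝 l, Integrable (fun ω ↦ Y ω ^ s) Q)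
    (heq : ∃ᶠ s in 𝓝[≠] l, ∫ ω, X ω ^ s ∂P = ∫ ω, Y ω ^ s ∂Q) :
    P.map X = Q.map Y := by
  have hlX := mem_interior_integrableExpSet_log hX hintX
  have hlY := mem_interior_integrableExpSet_log hY hintY
  simp only [← mgf_log_eq_integral_rpow hX, ← mgf_log_eq_integral_rpow hY] at heq
  rw [← map_exp_map_log hX (aemeasurable_of_mem_interior_integrableExpSet hlX),
    ← map_exp_map_log hY (aemeasurable_of_mem_interior_integrableExpSet hlY),
    map_eq_map_of_frequently_mgf_eq hlX hlY heq]

theorem ae_restrict_preimage_compl_zero_pos (hX : AEMeasurable X P) (hXnn : 0 ≤ᵐ[P] X) :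
    ∀ᵐ ω ∂P.restrict (X ⁻¹' {0}ᶜ), 0 < X ω := by
  have hne := ae_restrict_mem₀ (hX.nullMeasurableSet_preimage (measurableSet_singleton 0).compl)
  filter_upwards [hne, ae_restrict_of_ae hXnn] with ω hω hω0
  exact hω0.lt_of_ne' hω

theorem setIntegral_preimage_compl_zero_rpow (P : Measure Ω₁) (X : Ω₁ → ℝ) {s : ℝ} (hs : s ≠ 0) :
    ∫ ω in X ⁻¹' {0}ᶜ, X ω ^ s ∂P = ∫ ω, X ω ^ s ∂P := by
  refine setIntegral_eq_integral_of_forall_compl_eq_zero fun ω hω ↦ ?_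
  rw [show X ω = 0 by simpa using hω, Real.zero_rpow hs]

theorem mellin_injective_general [IsFiniteMeasure P] (hPQ : P univ = Q univ)
    (hX : AEMeasurable X P) (hY : AEMeasurable Y Q) (hXnn : 0 ≤ᵐ[P] X) (hYnn : 0 ≤ᵐ[Q] Y)
    (hintX : ∀ᶠ s in 𝓝 l, Integrable (fun ω ↦ X ω ^ s) P)
    (hintY : ∀ᶠ s in 𝓝 l, Integrable (fun ω ↦ Y ω ^ s) Q)
    (heq : ∃ᶠ s in 𝓝[≠] l, ∫ ω, X ω ^ s ∂P = ∫ ω, Y ω ^ s ∂Q) :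
    P.map X = Q.map Y := by
  have hne : ∀ᶠ s in 𝓝[≠] l, s ≠ 0 := nhdsNE_le_cofinite l (finite_singleton 0).compl_mem_cofinite
  refine eq_of_restrict_compl_singleton_eq (a := 0) ?_ ?_
  · rw [Measure.map_apply_of_aemeasurable hX .univ, Measure.map_apply_of_aemeasurable hY .univ,
      preimage_univ, preimage_univ, hPQ]
  rw [Measure.restrict_map_of_aemeasurable hX (measurableSet_singleton 0).compl,
    Measure.restrict_map_of_aemeasurable hY (measurableSet_singleton 0).compl]
  refine map_eq_map_of_frequently_integral_rpow_eq_of_pos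
    (ae_restrict_preimage_compl_zero_pos hX hXnn) (ae_restrict_preimage_compl_zero_pos hY hYnn)
    (hintX.mono fun s hs ↦ hs.restrict) (hintY.mono fun s hs ↦ hs.restrict)
    ((heq.and_eventually hne).mono fun s ⟨hs, hs0⟩ ↦ ?_)
  rw [setIntegral_preimage_compl_zero_rpow P X hs0,
    setIntegral_preimage_compl_zero_rpow Q Y hs0, hs]

end Mellin

/-- Injectivity of the Mellin transform: if the Mellin transforms of two nonnegative
random variables `X` and `Y` are finite and coincide on a nonempty open interval
`(α, β)`, then `X` and `Y` have the same distribution. -/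
theorem mellin_injective {Ω₁ Ω₂ : Type*} [MeasurableSpace Ω₁] [MeasurableSpace Ω₂]
    (P : Measure Ω₁) (Q : Measure Ω₂) [IsProbabilityMeasure P] [IsProbabilityMeasure Q]
    (X : Ω₁ → ℝ) (Y : Ω₂ → ℝ) (hX : Measurable X) (hY : Measurable Y)
    (hXnn : ∀ ω, 0 ≤ X ω) (hYnn : ∀ ω, 0 ≤ Y ω)
    {α β : ℝ} (hαβ : α < β)
    (hintX : ∀ l ∈ Ioo α β, Integrable (fun ω => X ω ^ l) P)
    (hintY : ∀ l ∈ Ioo α β, Integrable (fun ω => Y ω ^ l) Q)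
    (heq : ∀ l ∈ Ioo α β, ∫ ω, X ω ^ l ∂P = ∫ ω, Y ω ^ l ∂Q) :
    P.map X = Q.map Y := by
  obtain ⟨l, hl⟩ := nonempty_Ioo.mpr hαβ
  have hmem : Ioo α β ∈ 𝓝 l := isOpen_Ioo.mem_nhds hl
  exact mellin_injective_general (by simp) hX.aemeasurable hY.aemeasurable (ae_of_all _ hXnn)
    (ae_of_all _ hYnn) (eventually_of_mem hmem hintX) (eventually_of_mem hmem hintY)
    (eventually_of_mem (mem_nhdsWithin_of_mem_nhds hmem) heq).frequently
end

section
/- If X and Y are independent nonnegative random variables and t ∈ D_X ∩ D_Y, then (XY)_{(t)} has the same distribution as X_{(t)} Y_{(t)} where X_{(t)} and Y_{(t)} are taken independent. -/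
open MeasureTheory Set Filter

/-- The size-biased law of order `t` of a distribution `μ` on `ℝ`. -/
noncomputable def sizeBiased (μ : MeasureTheory.Measure ℝ) (t : ℝ) :
    MeasureTheory.Measure ℝ :=
  (∫⁻ x, ENNReal.ofReal (x ^ t) ∂μ)⁻¹ •
    μ.withDensity fun x => ENNReal.ofReal (x ^ t)

open scoped ENNReal

theorem withDensity_map {α β : Type*} [MeasurableSpace α] [MeasurableSpace β]
    {μ : Measure α} {g : α → β} {f : β → ℝ≥0∞} (hg : Measurable g) (hf : Measurable f) :
    (μ.map g).withDensity f = (μ.withDensity (f ∘ g)).map g := by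
  ext s hs
  rw [withDensity_apply _ hs, Measure.map_apply hg hs, withDensity_apply _ (hg hs),
    setLIntegral_map hs hf hg, Function.comp_def]

/-- The law `μ` biased by the weight `f`: its density with respect to `μ` is `f`, divided by the
total weight. Size biasing is the case of a power weight, exponential tilting that of an
exponential one. -/
noncomputable def weightBiased {α : Type*} [MeasurableSpace α] (μ : Measure α) (f : α → ℝ≥0∞) :
    Measure α :=
  (∫⁻ x, f x ∂μ)⁻¹ • μ.withDensity f

section MultiplicativeWeight

variable {M : Type*} [Monoid M] [MeasurableSpace M] [MeasurableMul₂ M]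
  {μ ν : Measure M} [SFinite ν] {f : M → ℝ≥0∞}

theorem lintegral_mconv_of_map_mul (hf : Measurable f)
    (hmul : ∀ᵐ p ∂μ.prod ν, f (p.1 * p.2) = f p.1 * f p.2) :
    ∫⁻ z, f z ∂(μ ∗ₘ ν) = (∫⁻ x, f x ∂μ) * ∫⁻ y, f y ∂ν := by
  rw [Measure.lintegral_mconv_eq_lintegral_prod hf, lintegral_congr_ae hmul,
    lintegral_prod_mul hf.aemeasurable hf.aemeasurable]

theorem withDensity_mconv_of_map_mul [SFinite μ] (hf : Measurable f)
    (hmul : ∀ᵐ p ∂μ.prod ν, f (p.1 * p.2) = f p.1 * f p.2) :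
    (μ ∗ₘ ν).withDensity f = μ.withDensity f ∗ₘ ν.withDensity f :=
  calc (μ ∗ₘ ν).withDensity f
    _ = ((μ.prod ν).withDensity fun p => f (p.1 * p.2)).map fun p => p.1 * p.2 :=
      withDensity_map measurable_mul hf
    _ = ((μ.prod ν).withDensity fun p => f p.1 * f p.2).map fun p => p.1 * p.2 := by
      rw [withDensity_congr_ae hmul]
    _ = μ.withDensity f ∗ₘ ν.withDensity f := by
      rw [← prod_withDensity hf hf, Measure.mconv]

theorem weightBiased_mconv [SFinite μ] (hf : Measurable f)
    (hmul : ∀ᵐ p ∂μ.prod ν, f (p.1 * p.2) = f p.1 * f p.2)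
    (h_zero_top : ∫⁻ x, f x ∂μ ≠ 0 ∨ ∫⁻ y, f y ∂ν ≠ ∞)
    (h_top_zero : ∫⁻ x, f x ∂μ ≠ ∞ ∨ ∫⁻ y, f y ∂ν ≠ 0) :
    weightBiased (μ ∗ₘ ν) f = weightBiased μ f ∗ₘ weightBiased ν f := by
  simp only [weightBiased]
  rw [lintegral_mconv_of_map_mul hf hmul, withDensity_mconv_of_map_mul hf hmul,
    ENNReal.mul_inv h_zero_top h_top_zero, Measure.mconv_smul_left, Measure.mconv_smul_right,
    smul_smul]

end MultiplicativeWeight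

theorem ae_prod_ofReal_mul_rpow {μ ν : Measure ℝ} [SFinite ν]
    (hμ : ∀ᵐ x ∂μ, 0 ≤ x) (hν : ∀ᵐ y ∂ν, 0 ≤ y) (t : ℝ) :
    ∀ᵐ p ∂μ.prod ν, ENNReal.ofReal ((p.1 * p.2) ^ t) =
      ENNReal.ofReal (p.1 ^ t) * ENNReal.ofReal (p.2 ^ t) := by
  filter_upwards [Measure.quasiMeasurePreserving_fst.ae hμ,
    Measure.quasiMeasurePreserving_snd.ae hν] with p hp₁ hp₂
  rw [Real.mul_rpow hp₁ hp₂, ENNReal.ofReal_mul (Real.rpow_nonneg hp₁ t)]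

/-- The real order `t` lies in the domain of the Mellin transform of a nonnegative variable with
law `μ`, and its `t`-th moment is nonzero, so that it can be size biased. An atom at `0` is excluded
for `t < 0`: the `t`-th moment is then infinite, although Lean has `(0 : ℝ) ^ t = 0`. -/
structure IsSizeBiasable (μ : Measure ℝ) (t : ℝ) : Prop where
  ae_nonneg : ∀ᵐ x ∂μ, 0 ≤ x
  measure_zero_of_neg : t < 0 → μ {0} = 0
  moment_ne_zero : ∫⁻ x, ENNReal.ofReal (x ^ t) ∂μ ≠ 0
  moment_ne_top : ∫⁻ x, ENNReal.ofReal (x ^ t) ∂μ ≠ ∞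

theorem IsSizeBiasable.of_order_nonneg {μ : Measure ℝ} {t : ℝ} (hsupp : μ {x : ℝ | x < 0} = 0)
    (ht : 0 ≤ t) (hpos : 0 < ∫⁻ x, ENNReal.ofReal (x ^ t) ∂μ)
    (hfin : ∫⁻ x, ENNReal.ofReal (x ^ t) ∂μ < ∞) : IsSizeBiasable μ t where
  ae_nonneg := by simpa [ae_iff] using hsupp
  measure_zero_of_neg := fun h => absurd h ht.not_gt
  moment_ne_zero := hpos.ne'
  moment_ne_top := hfin.ne

theorem sizeBiased_mul_general {μ ν : Measure ℝ} [SFinite μ] [SFinite ν] {t : ℝ}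
    (hμ : IsSizeBiasable μ t) (hν : IsSizeBiasable ν t) :
    sizeBiased ((μ.prod ν).map fun p => p.1 * p.2) t =
      ((sizeBiased μ t).prod (sizeBiased ν t)).map fun p => p.1 * p.2 := by
  have hmul := ae_prod_ofReal_mul_rpow hμ.ae_nonneg hν.ae_nonneg t
  exact weightBiased_mconv (by fun_prop) hmul (.inl hμ.moment_ne_zero) (.inl hμ.moment_ne_top)

/-- For independent nonnegative `X`, `Y` (with laws `μ`, `ν`) and `t` in both
Mellin domains, `(XY)_{(t)}` has the same law as the product of independent
copies of `X_{(t)}` and `Y_{(t)}`. -/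
theorem sizeBiased_mul (μ ν : Measure ℝ) [IsProbabilityMeasure μ]
    [IsProbabilityMeasure ν]
    (hμsupp : μ {x : ℝ | x < 0} = 0) (hνsupp : ν {x : ℝ | x < 0} = 0)
    {t : ℝ} (ht : 0 ≤ t)
    (hμpos : 0 < ∫⁻ x, ENNReal.ofReal (x ^ t) ∂μ)
    (hμfin : ∫⁻ x, ENNReal.ofReal (x ^ t) ∂μ < ⊤)
    (hνpos : 0 < ∫⁻ x, ENNReal.ofReal (x ^ t) ∂ν)
    (hνfin : ∫⁻ x, ENNReal.ofReal (x ^ t) ∂ν < ⊤) :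
    sizeBiased ((μ.prod ν).map fun p => p.1 * p.2) t =
      ((sizeBiased μ t).prod (sizeBiased ν t)).map fun p => p.1 * p.2 :=
  sizeBiased_mul_general (.of_order_nonneg hμsupp ht hμpos hμfin)
    (.of_order_nonneg hνsupp ht hνpos hνfin)
end
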